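/- Let m, n be natural numbers with 0 ≤ m ≤ n, and let x > 1 be real. Then d^m/dx^m [P_n(x)·log(x−1)] = P_n^{(m)}(x)·log(x−1) + (ψ(n+1) − ψ(n−m+1))·P_n^{(m)}(x) + ((n+m)!/(n−m)!)·(x−1)^{−m} Σ_{k=0}^{m−1} (−1)^k·((2k+1)/((n−k)(k+n+1))) · Σ_{j=0}^{k} (−1)^j·((k+j)!/((k−j)!·(m+j)!·j!))·((x+1)/2)^j − Σ_{k=0}^{n−m−1} ((2k+2m+1)/((n−m−k)(k+n+m+1)))·(1 − (k!·(n+m)!)/((k+2m)!·(n−m)!))·P_{k+m}^{(m)}(x). -/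

import Mathlib

open Finset Real

/-- The Legendre polynomial `P_n`, via its explicit expansion
`P_n(x) = ∑_{k=0}^{n} ((n+k)!/((k!)² (n−k)!)) ((x−1)/2)^k`. -/
noncomputable def legendreP (n : ℕ) (x : ℝ) : ℝ :=
  ∑ k ∈ Finset.range (n + 1),
    (((n + k).factorial : ℝ) / (((k.factorial : ℝ)) ^ 2 * ((n - k).factorial : ℝ))) *
      ((x - 1) / 2) ^ k

/-- The harmonic number `H_i = ∑_{r=1}^{i} 1/r`. -/
noncomputable def harm (i : ℕ) : ℝ := ∑ r ∈ Finset.range i, (1 : ℝ) / (r + 1)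

/-- The digamma function at a positive integer `j`: `ψ(j) = H_{j−1} − γ`. -/
noncomputable def psi (j : ℕ) : ℝ := harm (j - 1) - Real.eulerMascheroniConstant

/-!
As a function of `λ_n = n (n + 1)`, the coefficient of `(x - 1) ^ i` in `P_n` is a multiple of the
Newton polynomial `∏_{l < i} (λ_n - λ_l)`, while the denominators `(n - k) (n + k + 1)` of the
formula are `λ_n - λ_k`. The `m`-th derivative of `(x - 1) ^ i log (x - 1)` contributes a logarithm
and the harmonic numbers `H_i - H_{i - m}` if `m ≤ i`, and a negative power of `x - 1` if `i < m`.

For `m ≤ i`, the divided differences of `Λ ↦ ∏_{l < m} (Λ - λ_l)⁻¹` turn the sum over the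
`P_{k+m}^{(m)}` into sums that telescope to `∑_{j < m} (1 / (n - j) - 1 / (i - j))`. For `i < m`,
Lagrange interpolation of the Newton polynomial at `λ_0, …, λ_{m-1}` writes its quotient by
`∏_{l < m} (λ_n - λ_l)` in partial fractions, and the `k`-th partial fractions for all `i` together
are the expansion of the polynomial factor of `P_k^{-m}(-x)` in powers of `x - 1`.
-/

/-- The eigenvalue `n(n+1)` of the Legendre operator `f ↦ -((1 - x²) f')'` belonging to `P_n`. -/
def legendreEigenvalue (n : ℕ) : ℝ := n * (n + 1)

/-- The Newton polynomial on the nodes `legendreEigenvalue 0, …, legendreEigenvalue (i - 1)`,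
evaluated at `legendreEigenvalue n`; it is the ratio `(n + i)! / (n - i)!` for `i ≤ n` and `0` for
`n < i`. -/
def eigenvalueProd (n i : ℕ) : ℝ :=
  ∏ l ∈ range i, (legendreEigenvalue n - legendreEigenvalue l)

/-- The coefficient of `(x - 1) ^ i` in `P_n`, which is `0` for `n < i`. -/
noncomputable def legendreCoeff (n i : ℕ) : ℝ :=
  eigenvalueProd n i / ((i.factorial : ℝ) ^ 2 * 2 ^ i)

/-- The polynomial `(x - 1) ^ m (x² - 1) ^ (-m/2) P_k^{-m}(-x)`, which is the associated Legendre
function of negative order at the reflected argument `-x`, without its algebraic factor. -/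
noncomputable def reflectedLegendreFactor (m k : ℕ) (x : ℝ) : ℝ :=
  ∑ j ∈ range (k + 1), (-1) ^ j * ((k + j).factorial : ℝ) /
    (((k - j).factorial : ℝ) * ((m + j).factorial : ℝ) * (j.factorial : ℝ)) * ((x + 1) / 2) ^ j

section Eigenvalue

variable {i k n : ℕ}

lemma legendreEigenvalue_sub (n k : ℕ) :
    legendreEigenvalue n - legendreEigenvalue k = ((n : ℝ) - k) * ((k : ℝ) + n + 1) := by
  unfold legendreEigenvalue
  ring

lemma legendreEigenvalue_strictMono : StrictMono legendreEigenvalue := by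
  intro k n hkn
  have hkn' : (k : ℝ) < n := mod_cast hkn
  rw [← sub_pos, legendreEigenvalue_sub]
  exact mul_pos (sub_pos.2 hkn') (by positivity)

lemma legendreEigenvalue_sub_ne_zero (h : n ≠ k) :
    legendreEigenvalue n - legendreEigenvalue k ≠ 0 :=
  sub_ne_zero.2 (legendreEigenvalue_strictMono.injective.ne h)

@[simp]
lemma eigenvalueProd_zero_right (n : ℕ) : eigenvalueProd n 0 = 1 := by
  simp [eigenvalueProd]

lemma eigenvalueProd_succ_right (n i : ℕ) :
    eigenvalueProd n (i + 1) =
      eigenvalueProd n i * (legendreEigenvalue n - legendreEigenvalue i) :=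
  prod_range_succ _ _

lemma eigenvalueProd_eq_zero (h : n < i) : eigenvalueProd n i = 0 :=
  prod_eq_zero (mem_range.2 h) (sub_self _)

lemma eigenvalueProd_ne_zero (h : i ≤ n) : eigenvalueProd n i ≠ 0 :=
  prod_ne_zero_iff.2 fun _ hl ↦
    legendreEigenvalue_sub_ne_zero ((mem_range.1 hl).trans_le h).ne'

lemma eigenvalueProd_eq_factorial_div (h : i ≤ n) :
    eigenvalueProd n i = ((n + i).factorial : ℝ) / ((n - i).factorial : ℝ) := by
  induction i with
  | zero => simp [(Nat.cast_ne_zero (R := ℝ)).2 n.factorial_ne_zero]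
  | succ i ih =>
    obtain ⟨e, rfl⟩ := Nat.exists_eq_add_of_le h
    rw [eigenvalueProd_succ_right, ih (by lia), legendreEigenvalue_sub,
      show i + 1 + e - i = e + 1 by lia, Nat.add_sub_cancel_left, ← add_assoc (i + 1 + e),
      Nat.factorial_succ (i + 1 + e + i), Nat.factorial_succ e]
    push_cast
    field_simp
    ring

lemma sub_mul_eigenvalueProd_succ_left (n i : ℕ) :
    ((n : ℝ) + 1 - i) * eigenvalueProd (n + 1) i = ((n : ℝ) + 1 + i) * eigenvalueProd n i := by
  induction i with
  | zero => simp
  | succ i ih =>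
    simp only [eigenvalueProd_succ_right, legendreEigenvalue_sub]
    push_cast
    linear_combination ((n : ℝ) - i) * (n + i + 2) * ih

end Eigenvalue

section HarmonicSum

variable {i j m n q : ℕ}

lemma harm_succ (k : ℕ) : harm (k + 1) = harm k + 1 / ((k : ℝ) + 1) :=
  sum_range_succ _ _

lemma harm_sub_harm_sub (h : m ≤ n) :
    harm n - harm (n - m) = ∑ j ∈ range m, 1 / ((n : ℝ) - j) := by
  induction m with
  | zero => simp
  | succ m ih =>
    obtain ⟨e, rfl⟩ := Nat.exists_eq_add_of_le h
    rw [sum_range_succ, ← ih (by lia), show m + 1 + e - m = e + 1 by lia,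
      Nat.add_sub_cancel_left, harm_succ]
    push_cast
    ring

-- Newton's divided differences of `Λ ↦ 1 / ∏ l < m, (Λ - λ_l)`.
lemma one_sub_eigenvalueProd_div (n : ℕ) (h : m ≤ q) :
    1 - eigenvalueProd n m / eigenvalueProd q m =
      -(legendreEigenvalue n - legendreEigenvalue q) *
        ∑ j ∈ range m, eigenvalueProd n j / eigenvalueProd q (j + 1) := by
  induction m with
  | zero => simp
  | succ m ih =>
    have hq : eigenvalueProd q m ≠ 0 := eigenvalueProd_ne_zero (by lia)
    have hqm := legendreEigenvalue_sub_ne_zero (show q ≠ m by lia)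
    rw [sum_range_succ, mul_add, ← ih (by lia)]
    simp only [eigenvalueProd_succ_right]
    field_simp
    ring

-- A telescoping sum: the right-hand side vanishes at `n = m` and its difference in `n` is the
-- summand.
lemma sum_Ico_eigenvalueProd_div (hj : j < m) (hi : m ≤ i) (hn : m ≤ n) :
    ∑ q ∈ Ico m n, (2 * (q : ℝ) + 1) * (eigenvalueProd q i / eigenvalueProd q (j + 1)) =
      ((n : ℝ) - i) * ((j : ℝ) + n + 1) / ((i : ℝ) - j) *
        (eigenvalueProd n i / eigenvalueProd n (j + 1)) := by
  have hij : (i : ℝ) - j ≠ 0 := sub_ne_zero.2 (mod_cast (hj.trans_le hi).ne')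
  induction n, hn using Nat.le_induction with
  | base =>
    obtain rfl | hi := hi.eq_or_lt
    · simp
    · simp [eigenvalueProd_eq_zero hi]
  | succ n hn ih =>
    have hA : eigenvalueProd n (j + 1) ≠ 0 := eigenvalueProd_ne_zero (by lia)
    have hA' : eigenvalueProd (n + 1) (j + 1) ≠ 0 := eigenvalueProd_ne_zero (by lia)
    have hi' := sub_mul_eigenvalueProd_succ_left n i
    have hj' := sub_mul_eigenvalueProd_succ_left n (j + 1)
    rw [sum_Ico_succ_top hn, ih]
    push_cast at hj' ⊢
    field_simp
    linear_combination (-(j : ℝ) - n - 2) * eigenvalueProd n (j + 1) * hi' +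
      ((n : ℝ) + 1 + i) * eigenvalueProd n i * hj'

lemma sum_Ico_eigenvalueProd_eq_harm (hm : m ≤ i) (hi : i ≤ n) :
    ∑ q ∈ Ico m n,
        (2 * (q : ℝ) + 1) / (legendreEigenvalue n - legendreEigenvalue q) *
          (1 - eigenvalueProd n m / eigenvalueProd q m) * eigenvalueProd q i =
      eigenvalueProd n i * (harm n - harm (n - m) - (harm i - harm (i - m))) := by
  have expand : ∀ q ∈ Ico m n,
      (2 * (q : ℝ) + 1) / (legendreEigenvalue n - legendreEigenvalue q) *
          (1 - eigenvalueProd n m / eigenvalueProd q m) * eigenvalueProd q i =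
        ∑ j ∈ range m, -eigenvalueProd n j *
          ((2 * (q : ℝ) + 1) * (eigenvalueProd q i / eigenvalueProd q (j + 1))) := by
    intro q hq
    obtain ⟨hmq, hqn⟩ := mem_Ico.1 hq
    have hnq := legendreEigenvalue_sub_ne_zero hqn.ne'
    rw [one_sub_eigenvalueProd_div n hmq, ← mul_assoc, mul_neg, div_mul_cancel₀ _ hnq, mul_sum,
      sum_mul]
    exact sum_congr rfl fun j _ ↦ by ring
  rw [sum_congr rfl expand, sum_comm, harm_sub_harm_sub (hm.trans hi), harm_sub_harm_sub hm,
    ← sum_sub_distrib, mul_sum]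
  refine sum_congr rfl fun j hj ↦ ?_
  have hjm := mem_range.1 hj
  have hnj : (n : ℝ) - j ≠ 0 := sub_ne_zero.2 (mod_cast (show n ≠ j by lia))
  have hij : (i : ℝ) - j ≠ 0 := sub_ne_zero.2 (mod_cast (show i ≠ j by lia))
  have hA : eigenvalueProd n j ≠ 0 := eigenvalueProd_ne_zero (by lia)
  rw [← mul_sum, sum_Ico_eigenvalueProd_div hjm hm (hm.trans hi), eigenvalueProd_succ_right,
    legendreEigenvalue_sub]
  field_simp
  ring

end HarmonicSum

section PartialFractions

variable {i k m n : ℕ}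

lemma nodalWeight_legendreEigenvalue (h : k < m) :
    Lagrange.nodalWeight (range m) legendreEigenvalue k =
      (-1) ^ (m - 1 - k) * (2 * k + 1) /
        (((m - 1 - k).factorial : ℝ) * ((m + k).factorial : ℝ)) := by
  obtain ⟨e, rfl⟩ := Nat.exists_eq_add_of_lt h
  rw [show k + e + 1 - 1 - k = e by lia]
  unfold Lagrange.nodalWeight
  induction e with
  | zero =>
    rw [add_zero, range_add_one, erase_insert notMem_range_self, prod_inv_distrib]
    change (eigenvalueProd k k)⁻¹ = _
    rw [eigenvalueProd_eq_factorial_div le_rfl, add_right_comm, Nat.factorial_succ]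
    rw [Nat.sub_self, pow_zero, Nat.factorial_zero, Nat.cast_one]
    push_cast
    field_simp
    ring
  | succ e ih =>
    rw [← add_assoc, range_add_one, erase_insert_of_ne (by lia), prod_insert (by simp),
      ih (by lia), legendreEigenvalue_sub, add_right_comm (k + e + 1),
      Nat.factorial_succ (k + e + 1 + k), Nat.factorial_succ e]
    push_cast
    rw [show (k : ℝ) - (k + e + 1) = -(e + 1) by ring]
    field_simp
    ring

lemma sum_nodalWeight_mul_eigenvalueProd_div (hi : i < m) (hm : m ≤ n) :
    ∑ k ∈ range m, Lagrange.nodalWeight (range m) legendreEigenvalue k *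
        (eigenvalueProd k i / (legendreEigenvalue n - legendreEigenvalue k)) =
      eigenvalueProd n i / eigenvalueProd n m := by
  have eval_nodal (k l : ℕ) : (Lagrange.nodal (range l) legendreEigenvalue).eval
      (legendreEigenvalue k) = eigenvalueProd k l := Lagrange.eval_nodal
  have hdeg : (Lagrange.nodal (range i) legendreEigenvalue).degree < #(range m) := by
    rw [Lagrange.degree_nodal, card_range, card_range]
    exact mod_cast hi
  have hn : ∀ k ∈ range m, legendreEigenvalue n ≠ legendreEigenvalue k := fun k hk ↦
    legendreEigenvalue_strictMono.injective.ne ((mem_range.1 hk).trans_le hm).ne'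
  have interp := congrArg (Polynomial.eval (legendreEigenvalue n))
    (Lagrange.eq_interpolate legendreEigenvalue_strictMono.injective.injOn hdeg)
  rw [Lagrange.eval_interpolate_not_at_node _ hn] at interp
  simp only [eval_nodal] at interp
  rw [interp, mul_div_cancel_left₀ _ (eigenvalueProd_ne_zero hm)]
  exact sum_congr rfl fun k _ ↦ by ring

end PartialFractions

section Reexpansion

variable {i k m : ℕ}

-- The finite-difference form of the beta integral `∫₀¹ t ^ a * (1 - t) ^ (d + K)`.
lemma fwdDiff_iter_factorial_div (K d : ℕ) :
    (fwdDiff 1)^[K] (fun a : ℕ ↦ (a.factorial : ℝ) / ((a + d + 1).factorial : ℝ)) =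
      fun a ↦ (-1) ^ K * ((a.factorial : ℝ) * ((d + K).factorial : ℝ)) /
        ((d.factorial : ℝ) * ((a + d + 1 + K).factorial : ℝ)) := by
  induction K with
  | zero =>
    funext a
    simp only [Function.iterate_zero, id_eq, pow_zero, one_mul, add_zero]
    field_simp
  | succ K ih =>
    funext a
    rw [Function.iterate_succ_apply', ih, fwdDiff, ← add_assoc d K 1, ← add_assoc _ K 1,
      show a + 1 + d + 1 + K = a + d + 1 + K + 1 by ring, Nat.factorial_succ a,
      Nat.factorial_succ (d + K), Nat.factorial_succ (a + d + 1 + K)]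
    push_cast
    field_simp
    ring

lemma sum_choose_mul_factorial_div (K a d : ℕ) :
    ∑ l ∈ range (K + 1), (-1) ^ l * (K.choose l : ℝ) *
        (((a + l).factorial : ℝ) / ((a + l + d + 1).factorial : ℝ)) =
      (a.factorial : ℝ) * ((d + K).factorial : ℝ) /
        ((d.factorial : ℝ) * ((a + d + 1 + K).factorial : ℝ)) := by
  have sign (v : ℕ) : (-1 : ℝ) ^ v * (-1) ^ v = 1 := by
    rw [← pow_add, (Even.add_self v).neg_one_pow]
  have h := fwdDiff_iter_eq_sum_shift 1
    (fun a : ℕ ↦ (a.factorial : ℝ) / ((a + d + 1).factorial : ℝ)) K a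
  rw [fwdDiff_iter_factorial_div] at h
  calc
    _ = (-1) ^ K * ∑ l ∈ range (K + 1), ((-1 : ℤ) ^ (K - l) * K.choose l) •
          (((a + l • 1).factorial : ℝ) / ((a + l • 1 + d + 1).factorial : ℝ)) := by
      rw [mul_sum]
      refine sum_congr rfl fun l hl ↦ ?_
      obtain ⟨v, rfl⟩ := Nat.exists_eq_add_of_le (mem_range_succ_iff.1 hl)
      rw [Nat.add_sub_cancel_left, zsmul_eq_mul, smul_eq_mul, mul_one, pow_add]
      push_cast
      linear_combination (-(-1 : ℝ) ^ l * ((l + v).choose l) *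
        (((a + l).factorial : ℝ) / ((a + l + d + 1).factorial : ℝ))) * sign v
    _ = _ := by
      rw [← h, ← mul_div_assoc, ← mul_assoc, sign, one_mul]

lemma sum_choose_mul_eigenvalueProd_div (hi : i ≤ k) (hk : k < m) :
    ∑ j ∈ range (k + 1), (j.choose i : ℝ) *
        ((-1) ^ j * eigenvalueProd k j / (((m + j).factorial : ℝ) * (j.factorial : ℝ))) =
      (-1) ^ i * eigenvalueProd k i * ((m - 1 - i).factorial : ℝ) /
        ((i.factorial : ℝ) * ((m - 1 - k).factorial : ℝ) * ((m + k).factorial : ℝ)) := by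
  obtain ⟨K, rfl⟩ := Nat.exists_eq_add_of_le hi
  obtain ⟨d, rfl⟩ := Nat.exists_eq_add_of_lt hk
  have low : ∀ j ∈ range i, (j.choose i : ℝ) * ((-1) ^ j * eigenvalueProd (i + K) j /
      (((i + K + d + 1 + j).factorial : ℝ) * (j.factorial : ℝ))) = 0 := fun j hj ↦ by
    rw [Nat.choose_eq_zero_of_lt (mem_range.1 hj), Nat.cast_zero, zero_mul]
  have high : ∀ l ∈ range (K + 1), ((i + l).choose i : ℝ) *
      ((-1) ^ (i + l) * eigenvalueProd (i + K) (i + l) /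
        (((i + K + d + 1 + (i + l)).factorial : ℝ) * ((i + l).factorial : ℝ))) =
      (-1) ^ i / ((i.factorial : ℝ) * (K.factorial : ℝ)) * ((-1) ^ l * (K.choose l : ℝ) *
        (((i + K + i + l).factorial : ℝ) / ((i + K + i + l + d + 1).factorial : ℝ))) := by
    intro l hl
    obtain ⟨w, rfl⟩ := Nat.exists_eq_add_of_le (mem_range_succ_iff.1 hl)
    rw [eigenvalueProd_eq_factorial_div (by lia), Nat.cast_add_choose, Nat.cast_add_choose,
      show i + (l + w) - (i + l) = w by lia, ← add_assoc (i + (l + w)) i l,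
      show i + (l + w) + d + 1 + (i + l) = i + (l + w) + i + l + d + 1 by ring, pow_add]
    field_simp
  rw [show i + K + 1 = i + (K + 1) by ring, sum_range_add, sum_eq_zero low, zero_add,
    sum_congr rfl high, ← mul_sum, sum_choose_mul_factorial_div,
    eigenvalueProd_eq_factorial_div hi, show i + K + d + 1 - 1 - i = d + K by lia,
    show i + K + d + 1 - 1 - (i + K) = d by lia, Nat.add_sub_cancel_left,
    show i + K + i + d + 1 + K = i + K + d + 1 + (i + K) by ring]
  field_simp

-- With `t = (x - 1) / 2`, the left-hand side is `reflectedLegendreFactor m k x`.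
lemma sum_eigenvalueProd_mul_add_one_pow (hk : k < m) (t : ℝ) :
    ∑ j ∈ range (k + 1),
        (-1) ^ j * eigenvalueProd k j / (((m + j).factorial : ℝ) * (j.factorial : ℝ)) *
          (t + 1) ^ j =
      ∑ i ∈ range m, (-1) ^ i * eigenvalueProd k i * ((m - 1 - i).factorial : ℝ) /
        ((i.factorial : ℝ) * ((m - 1 - k).factorial : ℝ) * ((m + k).factorial : ℝ)) * t ^ i := by
  have binomial : ∀ j ∈ range (k + 1),
      (t + 1) ^ j = ∑ i ∈ range (k + 1), (j.choose i : ℝ) * t ^ i := by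
    intro j hj
    simp only [add_pow, one_pow, mul_one]
    refine sum_subset_zero_on_sdiff (range_subset_range.2 (mem_range.1 hj)) (fun i hi ↦ ?_)
      fun i _ ↦ mul_comm _ _
    simp only [mem_sdiff, mem_range] at hi
    rw [Nat.choose_eq_zero_of_lt (by lia), Nat.cast_zero, zero_mul]
  have vanish : ∀ i ∈ range m, i ∉ range (k + 1) →
      (-1) ^ i * eigenvalueProd k i * ((m - 1 - i).factorial : ℝ) /
        ((i.factorial : ℝ) * ((m - 1 - k).factorial : ℝ) * ((m + k).factorial : ℝ)) *
          t ^ i = 0 := by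
    intro i _ hi
    rw [eigenvalueProd_eq_zero (by simpa using hi), mul_zero, zero_mul, zero_div, zero_mul]
  rw [← sum_subset (range_subset_range.2 hk) vanish]
  calc
    _ = ∑ i ∈ range (k + 1), (∑ j ∈ range (k + 1), (j.choose i : ℝ) *
          ((-1) ^ j * eigenvalueProd k j / (((m + j).factorial : ℝ) * (j.factorial : ℝ)))) *
            t ^ i := by
      simp only [sum_mul]
      rw [sum_comm]
      refine sum_congr rfl fun j hj ↦ ?_
      rw [binomial j hj, mul_sum]
      exact sum_congr rfl fun i _ ↦ by ring
    _ = _ := sum_congr rfl fun i hi ↦ by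
      rw [sum_choose_mul_eigenvalueProd_div (mem_range_succ_iff.1 hi) hk]

end Reexpansion

section Derivatives

variable {i m n N : ℕ} {x : ℝ}

lemma iteratedDeriv_pow_mul_log (h : m ≤ i) (hx : x ≠ 0) :
    iteratedDeriv m (fun y ↦ y ^ i * Real.log y) x =
      i.descFactorial m * x ^ (i - m) * (Real.log x + (harm i - harm (i - m))) := by
  induction m generalizing x with
  | zero => simp
  | succ m ih =>
    obtain ⟨p, rfl⟩ := Nat.exists_eq_add_of_le h
    have hev : iteratedDeriv m (fun y ↦ y ^ (m + 1 + p) * Real.log y) =ᶠ[nhds x] _ :=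
      (eventually_ne_nhds hx).mono fun y hy ↦ ih (by lia) hy
    rw [show m + 1 + p - m = p + 1 by lia] at hev
    have hderiv := ((hasDerivAt_pow (p + 1) x).const_mul
      ((m + 1 + p).descFactorial m : ℝ)).mul
      ((Real.hasDerivAt_log hx).add_const (harm (m + 1 + p) - harm (p + 1)))
    rw [iteratedDeriv_succ, hev.deriv_eq]
    refine hderiv.deriv.trans ?_
    rw [Nat.descFactorial_succ, show m + 1 + p - m = p + 1 by lia, Nat.add_sub_cancel_left,
      harm_succ, Nat.add_sub_cancel]
    push_cast
    field_simp
    ring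

lemma iteratedDeriv_pow_mul_log_of_lt (h : i < m) (hx : x ≠ 0) :
    iteratedDeriv m (fun y ↦ y ^ i * Real.log y) x =
      (-1) ^ (m - 1 - i) * (i.factorial : ℝ) * ((m - 1 - i).factorial : ℝ) *
        x ^ ((i : ℤ) - m) := by
  obtain ⟨e, rfl⟩ := Nat.exists_eq_add_of_lt h
  have hev : iteratedDeriv (i + 1) (fun y ↦ y ^ i * Real.log y) =ᶠ[nhds x]
      fun y ↦ (i.factorial : ℝ) * y⁻¹ := by
    filter_upwards [eventually_ne_nhds hx] with y hy
    have hlog : iteratedDeriv i (fun y ↦ y ^ i * Real.log y) =ᶠ[nhds y]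
        fun y ↦ (i.factorial : ℝ) * (Real.log y + (harm i - harm 0)) :=
      (eventually_ne_nhds hy).mono fun z hz ↦ by
        simpa [Nat.descFactorial_self] using iteratedDeriv_pow_mul_log le_rfl hz
    rw [iteratedDeriv_succ, hlog.deriv_eq]
    exact (((Real.hasDerivAt_log hy).add_const _).const_mul _).deriv
  calc
    _ = iteratedDeriv e (iteratedDeriv (i + 1) fun y ↦ y ^ i * Real.log y) x := by
      rw [show i + e + 1 = e + (i + 1) by ring]
      simp only [iteratedDeriv_eq_iterate, ← Function.iterate_add_apply]
    _ = (i.factorial : ℝ) * ((-1) ^ e * e.factorial * x ^ (-1 - e : ℤ)) := by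
      rw [hev.iteratedDeriv_eq, iteratedDeriv_const_mul_field, iteratedDeriv_eq_iterate,
        iter_deriv_inv]
    _ = _ := by
      rw [show i + e + 1 - 1 - i = e by lia]
      push_cast
      rw [show (i : ℤ) - (i + e + 1) = -1 - e by ring]
      ring

lemma legendreP_eq_sum (hn : n < N) (x : ℝ) :
    legendreP n x = ∑ i ∈ range N, legendreCoeff n i * (x - 1) ^ i := by
  have hsub : range (n + 1) ⊆ range N := range_subset_range.2 hn
  rw [legendreP, ← sum_subset hsub fun i _ hi ↦ ?_]
  · refine sum_congr rfl fun i hi ↦ ?_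
    rw [legendreCoeff, eigenvalueProd_eq_factorial_div (mem_range_succ_iff.1 hi), div_pow]
    ring
  · rw [legendreCoeff, eigenvalueProd_eq_zero (by simpa using hi), zero_div, zero_mul]

lemma iteratedDeriv_legendreP (hn : n < N) (m : ℕ) (x : ℝ) :
    iteratedDeriv m (legendreP n) x =
      ∑ i ∈ Ico m N, legendreCoeff n i * (i.descFactorial m * (x - 1) ^ (i - m)) := by
  have hpow (i : ℕ) : iteratedDeriv m (fun y ↦ (y - 1) ^ i) x =
      i.descFactorial m * (x - 1) ^ (i - m) := by
    simp only [iteratedDeriv_comp_sub_const (f := fun y : ℝ ↦ y ^ i), iteratedDeriv_pow]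
  rw [funext (legendreP_eq_sum hn), iteratedDeriv_fun_sum fun i _ ↦ by fun_prop]
  simp only [iteratedDeriv_const_mul_field, hpow]
  refine (sum_subset (fun i hi ↦ mem_range.2 (mem_Ico.1 hi).2) fun i hiN hi ↦ ?_).symm
  have him : i < m := by
    simp only [mem_range, mem_Ico] at hiN hi
    lia
  rw [Nat.descFactorial_of_lt him, Nat.cast_zero, zero_mul, mul_zero]

lemma iteratedDeriv_legendreP_mul_log (hmn : m ≤ n) (hx : x ≠ 1) :
    iteratedDeriv m (fun y ↦ legendreP n y * Real.log (y - 1)) x =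
      ∑ i ∈ range m, legendreCoeff n i *
        ((-1) ^ (m - 1 - i) * (i.factorial : ℝ) * ((m - 1 - i).factorial : ℝ) *
          (x - 1) ^ ((i : ℤ) - m)) +
      ∑ i ∈ Ico m (n + 1), legendreCoeff n i * (i.descFactorial m * (x - 1) ^ (i - m)) *
        (Real.log (x - 1) + (harm i - harm (i - m))) := by
  have hx' : x - 1 ≠ 0 := sub_ne_zero.2 hx
  have hsmooth (i : ℕ) : ContDiffAt ℝ m (fun y ↦ y ^ i * Real.log y) (x - 1) :=
    (contDiffAt_id.pow i).mul (Real.contDiffAt_log.2 hx')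
  have hexpand (y : ℝ) : legendreP n y * Real.log (y - 1) =
      ∑ i ∈ range (n + 1), legendreCoeff n i * ((y - 1) ^ i * Real.log (y - 1)) := by
    simp only [legendreP_eq_sum n.lt_succ_self, sum_mul, mul_assoc]
  rw [funext hexpand, congrFun (iteratedDeriv_comp_sub_const m
      (fun y : ℝ ↦ ∑ i ∈ range (n + 1), legendreCoeff n i * (y ^ i * Real.log y)) 1) x,
    iteratedDeriv_fun_sum fun i _ ↦ contDiffAt_const.mul (hsmooth i)]
  simp only [iteratedDeriv_const_mul_field]
  rw [← sum_range_add_sum_Ico _ (hmn.trans n.le_succ)]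
  congr 1
  · refine sum_congr rfl fun i hi ↦ ?_
    rw [iteratedDeriv_pow_mul_log_of_lt (mem_range.1 hi) hx']
  · refine sum_congr rfl fun i hi ↦ ?_
    rw [iteratedDeriv_pow_mul_log (mem_Ico.1 hi).1 hx']
    ring

end Derivatives

section Expansions

variable {k m n : ℕ} {x : ℝ}

lemma reflectedLegendreFactor_eq_nodalWeight_mul (hk : k < m) (x : ℝ) :
    (-1 : ℝ) ^ k * (2 * k + 1) * reflectedLegendreFactor m k x =
      Lagrange.nodalWeight (range m) legendreEigenvalue k *
        ∑ i ∈ range m, (-1) ^ (m - 1 - i) * ((m - 1 - i).factorial : ℝ) / (i.factorial : ℝ) *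
          eigenvalueProd k i * ((x - 1) / 2) ^ i := by
  have to_eigenvalueProd : ∀ j ∈ range (k + 1), (-1 : ℝ) ^ j * ((k + j).factorial : ℝ) /
        (((k - j).factorial : ℝ) * ((m + j).factorial : ℝ) * (j.factorial : ℝ)) *
          ((x + 1) / 2) ^ j =
      (-1) ^ j * eigenvalueProd k j / (((m + j).factorial : ℝ) * (j.factorial : ℝ)) *
        ((x - 1) / 2 + 1) ^ j := by
    intro j hj
    rw [eigenvalueProd_eq_factorial_div (mem_range_succ_iff.1 hj),
      show (x - 1) / 2 + 1 = (x + 1) / 2 by ring]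
    field_simp
  rw [reflectedLegendreFactor, sum_congr rfl to_eigenvalueProd,
    sum_eigenvalueProd_mul_add_one_pow hk, mul_sum, mul_sum, nodalWeight_legendreEigenvalue hk]
  refine sum_congr rfl fun i hi ↦ ?_
  have him := mem_range.1 hi
  have sign : (-1 : ℝ) ^ k * (-1) ^ i = (-1) ^ (m - 1 - k) * (-1) ^ (m - 1 - i) := by
    rw [← pow_add, ← pow_add]
    exact neg_one_pow_congr (by simp only [Nat.even_iff]; lia)
  field_simp
  linear_combination eigenvalueProd k i * ((x - 1) / 2) ^ i * sign

lemma sum_reflectedLegendreFactor_eq (hmn : m ≤ n) (hx : x ≠ 1) :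
    ((n + m).factorial : ℝ) / ((n - m).factorial : ℝ) * (x - 1) ^ (-(m : ℤ)) *
        ∑ k ∈ range m, (-1 : ℝ) ^ k * ((2 * k + 1 : ℝ) / (((n : ℝ) - k) * ((k : ℝ) + n + 1))) *
          reflectedLegendreFactor m k x =
      ∑ i ∈ range m, legendreCoeff n i *
        ((-1) ^ (m - 1 - i) * (i.factorial : ℝ) * ((m - 1 - i).factorial : ℝ) *
          (x - 1) ^ ((i : ℤ) - m)) := by
  have hx' : x - 1 ≠ 0 := sub_ne_zero.2 hx
  have hprod := eigenvalueProd_ne_zero hmn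
  have inner : ∀ k ∈ range m,
      (-1 : ℝ) ^ k * ((2 * k + 1 : ℝ) / (((n : ℝ) - k) * ((k : ℝ) + n + 1))) *
          reflectedLegendreFactor m k x =
        ∑ i ∈ range m, (-1) ^ (m - 1 - i) * ((m - 1 - i).factorial : ℝ) / (i.factorial : ℝ) *
          ((x - 1) / 2) ^ i * (Lagrange.nodalWeight (range m) legendreEigenvalue k *
            (eigenvalueProd k i / (legendreEigenvalue n - legendreEigenvalue k))) := by
    intro k hk
    rw [← legendreEigenvalue_sub, ← mul_div_assoc, div_mul_eq_mul_div,
      reflectedLegendreFactor_eq_nodalWeight_mul (mem_range.1 hk), mul_sum, sum_div]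
    exact sum_congr rfl fun i _ ↦ by ring
  rw [sum_congr rfl inner, sum_comm, mul_sum, ← eigenvalueProd_eq_factorial_div hmn]
  refine sum_congr rfl fun i hi ↦ ?_
  rw [← mul_sum, sum_nodalWeight_mul_eigenvalueProd_div (mem_range.1 hi) hmn, legendreCoeff,
    div_pow, zpow_sub₀ hx', zpow_neg, zpow_natCast, zpow_natCast]
  field_simp

lemma sum_mul_iteratedDeriv_legendreP_eq (hmn : m ≤ n) (x : ℝ) :
    ∑ k ∈ range (n - m),
        ((2 * k + 2 * m + 1 : ℝ) / (((n : ℝ) - m - k) * ((k : ℝ) + n + m + 1))) *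
          (1 - ((k.factorial : ℝ) * ((n + m).factorial : ℝ)) /
            (((k + 2 * m).factorial : ℝ) * ((n - m).factorial : ℝ))) *
          iteratedDeriv m (legendreP (k + m)) x =
      ∑ i ∈ Ico m (n + 1), legendreCoeff n i * (i.descFactorial m * (x - 1) ^ (i - m)) *
        (harm n - harm (n - m) - (harm i - harm (i - m))) := by
  have reindex : ∀ k ∈ range (n - m),
      ((2 * k + 2 * m + 1 : ℝ) / (((n : ℝ) - m - k) * ((k : ℝ) + n + m + 1))) *
          (1 - ((k.factorial : ℝ) * ((n + m).factorial : ℝ)) /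
            (((k + 2 * m).factorial : ℝ) * ((n - m).factorial : ℝ))) *
          iteratedDeriv m (legendreP (k + m)) x =
        (2 * ((m + k : ℕ) : ℝ) + 1) / (legendreEigenvalue n - legendreEigenvalue (m + k)) *
          (1 - eigenvalueProd n m / eigenvalueProd (m + k) m) *
          iteratedDeriv m (legendreP (m + k)) x := by
    intro k _
    rw [legendreEigenvalue_sub, eigenvalueProd_eq_factorial_div hmn,
      eigenvalueProd_eq_factorial_div (Nat.le_add_right m k), Nat.add_sub_cancel_left,
      add_comm m k, add_assoc k m m, ← two_mul]
    push_cast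
    congr 2
    · congr 1 <;> ring
    · field_simp
  rw [sum_congr rfl reindex, ← sum_Ico_eq_sum_range (fun q : ℕ ↦ (2 * (q : ℝ) + 1) /
    (legendreEigenvalue n - legendreEigenvalue q) *
      (1 - eigenvalueProd n m / eigenvalueProd q m) * iteratedDeriv m (legendreP q) x)]
  have expand : ∀ q ∈ Ico m n, iteratedDeriv m (legendreP q) x =
      ∑ i ∈ Ico m (n + 1), legendreCoeff q i * (i.descFactorial m * (x - 1) ^ (i - m)) :=
    fun q hq ↦ iteratedDeriv_legendreP (by have := mem_Ico.1 hq; lia) m x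
  rw [sum_congr rfl fun q hq ↦ by rw [expand q hq, mul_sum], sum_comm]
  refine sum_congr rfl fun i hi ↦ ?_
  obtain ⟨hmi, hin⟩ := mem_Ico.1 hi
  calc
    _ = (i.descFactorial m * (x - 1) ^ (i - m)) / ((i.factorial : ℝ) ^ 2 * 2 ^ i) *
          ∑ q ∈ Ico m n, (2 * (q : ℝ) + 1) / (legendreEigenvalue n - legendreEigenvalue q) *
            (1 - eigenvalueProd n m / eigenvalueProd q m) * eigenvalueProd q i := by
      rw [mul_sum]
      exact sum_congr rfl fun q _ ↦ by
        rw [legendreCoeff]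
        ring
    _ = _ := by
      rw [sum_Ico_eigenvalueProd_eq_harm hmi (Nat.lt_succ_iff.1 hin), legendreCoeff]
      ring

end Expansions

theorem stmt_9_general (m n : ℕ) (hmn : m ≤ n) (x : ℝ) (hx : x ≠ 1) :
    iteratedDeriv m (fun y => legendreP n y * Real.log |y - 1|) x =
      iteratedDeriv m (legendreP n) x * Real.log |x - 1|
      + (psi (n + 1) - psi (n - m + 1)) * iteratedDeriv m (legendreP n) x
      + ((n + m).factorial : ℝ) / ((n - m).factorial : ℝ) * (x - 1) ^ (-(m : ℤ)) *
          ∑ k ∈ Finset.range m,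
            (-1 : ℝ) ^ k * ((2 * k + 1 : ℝ) / (((n : ℝ) - k) * ((k : ℝ) + n + 1))) *
              ∑ j ∈ Finset.range (k + 1),
                (-1 : ℝ) ^ j * ((k + j).factorial : ℝ) /
                    (((k - j).factorial : ℝ) * ((m + j).factorial : ℝ) *
                      (j.factorial : ℝ)) * ((x + 1) / 2) ^ j
      - ∑ k ∈ Finset.range (n - m),
          ((2 * k + 2 * m + 1 : ℝ) / (((n : ℝ) - m - k) * ((k : ℝ) + n + m + 1))) *
            (1 - ((k.factorial : ℝ) * ((n + m).factorial : ℝ)) /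
                (((k + 2 * m).factorial : ℝ) * ((n - m).factorial : ℝ))) *
            iteratedDeriv m (legendreP (k + m)) x := by
  have hpsi : psi (n + 1) - psi (n - m + 1) = harm n - harm (n - m) := by
    simp [psi]
  have hneg := sum_reflectedLegendreFactor_eq hmn hx
  unfold reflectedLegendreFactor at hneg
  have hP := iteratedDeriv_legendreP n.lt_succ_self m x
  have hlog : ∑ i ∈ Ico m (n + 1), legendreCoeff n i * (i.descFactorial m * (x - 1) ^ (i - m)) *
        (Real.log (x - 1) + (harm i - harm (i - m))) =
      iteratedDeriv m (legendreP n) x * (Real.log (x - 1) + (harm n - harm (n - m))) -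
        ∑ i ∈ Ico m (n + 1), legendreCoeff n i * (i.descFactorial m * (x - 1) ^ (i - m)) *
          (harm n - harm (n - m) - (harm i - harm (i - m))) := by
    rw [hP, sum_mul, ← sum_sub_distrib]
    exact sum_congr rfl fun i _ ↦ by ring
  simp only [Real.log_abs]
  rw [iteratedDeriv_legendreP_mul_log hmn hx, hneg,
    sum_mul_iteratedDeriv_legendreP_eq hmn, hlog, hpsi]
  ring

theorem stmt_9 (m n : ℕ) (hmn : m ≤ n) (x : ℝ) (hx : 1 < x) :
    iteratedDeriv m (fun y => legendreP n y * Real.log (y - 1)) x =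
      iteratedDeriv m (legendreP n) x * Real.log (x - 1)
      + (psi (n + 1) - psi (n - m + 1)) * iteratedDeriv m (legendreP n) x
      + ((n + m).factorial : ℝ) / ((n - m).factorial : ℝ) * (x - 1) ^ (-(m : ℤ)) *
          ∑ k ∈ Finset.range m,
            (-1 : ℝ) ^ k * ((2 * k + 1 : ℝ) / (((n : ℝ) - k) * ((k : ℝ) + n + 1))) *
              ∑ j ∈ Finset.range (k + 1),
                (-1 : ℝ) ^ j * ((k + j).factorial : ℝ) /
                    (((k - j).factorial : ℝ) * ((m + j).factorial : ℝ) *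
                      (j.factorial : ℝ)) * ((x + 1) / 2) ^ j
      - ∑ k ∈ Finset.range (n - m),
          ((2 * k + 2 * m + 1 : ℝ) / (((n : ℝ) - m - k) * ((k : ℝ) + n + m + 1))) *
            (1 - ((k.factorial : ℝ) * ((n + m).factorial : ℝ)) /
                (((k + 2 * m).factorial : ℝ) * ((n - m).factorial : ℝ))) *
            iteratedDeriv m (legendreP (k + m)) x := by
  simpa only [Real.log_abs] using stmt_9_general m n hmn x hx.ne'
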